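/- Let n ≥ 3 be an integer. There exists a finite constant C > 0, depending only on n, such that ‖T(f₁,…,fₙ)‖_{(n+1)/2} ≤ C (∏_{j=1}^{n−1} ‖f_j‖_{(n+1)/(n−1)}) ‖fₙ‖_1 for all nonnegative measurable functions f₁,…,fₙ on ℝ; that is, T is of strong type at the point G = ((n−1)/(n+1),…,(n−1)/(n+1), 1; 2/(n+1)). -/

import Mathlib

open MeasureTheory ENNReal

/-- The `L^p` "norm" (with respect to Lebesgue measure on `ℝ`) of an
`ℝ≥0∞`-valued function, with the convention for `p = ∞`. -/
noncomputable def lpNorm (p : ℝ≥0∞) (g : ℝ → ℝ≥0∞) : ℝ≥0∞ :=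
  if p = ∞ then essSup g (volume : Measure ℝ)
  else (∫⁻ x, g x ^ p.toReal) ^ (1 / p.toReal)

/-- The normalized (total mass 1) surface measure on the unit sphere
`S^{n-1} ⊂ ℝ^n`, viewed as a measure on `ℝ^n` supported on the sphere. -/
noncomputable def normSphere (n : ℕ) : Measure (EuclideanSpace ℝ (Fin n)) :=
  (Measure.map Subtype.val
      ((volume : Measure (EuclideanSpace ℝ (Fin n))).toSphere) Set.univ)⁻¹ •
    Measure.map Subtype.val ((volume : Measure (EuclideanSpace ℝ (Fin n))).toSphere)

/-- The multilinear spherical average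
`T(f₁,…,fₙ)(x) = ∫_{S^{n-1}} ∏_{j=1}^n f_j(x - σ_j) dσ(σ)`. -/
noncomputable def sphAvg (n : ℕ) (f : Fin n → ℝ → ℝ) (x : ℝ) : ℝ≥0∞ :=
  ∫⁻ σ, ∏ j, ENNReal.ofReal (f j (x - σ j)) ∂(normSphere n)

/-!
Testing `T(f)` against `g` and substituting `x = z + σ_m` freezes the factor `f_m ∈ L¹`. What is
left is the form `∫ ∏_l f_l(Y_l) dσ` in all `n` linear coordinates `Y_l` of the point `σ`, for the
basis with `Y_m = σ_m` and `Y_l = σ_m - σ_l`, to be bounded on `L^p` with `p = (n + 1) / (n - 1)`.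

Hölder's inequality reduces this to `L¹` bounds for the products omitting one or two of the
factors, i.e. to bounded densities for the law of `n - 1` or `n - 2` of the coordinates. Surface
measure being a limit of Lebesgue measure on thin shells, such a density is controlled by the
slices of a shell of thickness `ε`: a plane always meets it in area `O(ε)`, and a line in length
`O(ε)` as long as it is transversal to the sphere. At every point of the sphere some basis
direction is transversal, so the sphere is covered by finitely many cones, and on the cone of the
direction `i` Hölder's inequality is applied to the bound omitting `i` and to those omitting a
pair of indices.
-/

section Shell

open Set Metric Module
open scoped NNReal Pointwise

/-- The shell of thickness `ε` just inside the unit sphere. Surface measure is the limit of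
`ε⁻¹` times the restriction of Lebesgue measure to it. -/
def innerShell (E : Type*) [NormedAddCommGroup E] (ε : ℝ) : Set E :=
  {x | 1 - ε ≤ ‖x‖ ∧ ‖x‖ < 1}

lemma measurableSet_innerShell {E : Type*} [NormedAddCommGroup E] [MeasurableSpace E]
    [BorelSpace E] (ε : ℝ) : MeasurableSet (innerShell E ε) :=
  (measurableSet_le measurable_const measurable_norm).inter
    (measurableSet_lt measurable_norm measurable_const)

variable {E F G : Type*}
  [NormedAddCommGroup E] [NormedSpace ℝ E] [MeasurableSpace E] [BorelSpace E]
  [NormedAddCommGroup F] [NormedSpace ℝ F]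
  [NormedAddCommGroup G] [NormedSpace ℝ G]

lemma ofReal_mul_toSphere_le [FiniteDimensional ℝ E] (μ : Measure E) [μ.IsAddHaarMeasure]
    {s : Set (sphere (0 : E) 1)} (hs : MeasurableSet s) {ε : ℝ} (hε : ε ∈ Ioo (0 : ℝ) 1) :
    ENNReal.ofReal ε * μ.toSphere s ≤ finrank ℝ E * μ (Ico (1 - ε) 1 • ((↑) '' s : Set E)) := by
  rcases subsingleton_or_nontrivial E with hE | hE
  · simp [μ.toSphere_eq_zero_iff.2 hE]
  have hε1 : 0 < 1 - ε := sub_pos.2 hε.2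
  rw [μ.toSphere_apply' hs, mul_left_comm]
  gcongr
  set T : Set E := Ioo (0 : ℝ) 1 • ((↑) '' s)
  have hT : μ T ≠ ∞ := by
    refine ne_top_of_le_ne_top (measure_ball_lt_top (x := (0 : E)) (r := 1)).ne (measure_mono ?_)
    rintro _ ⟨r, hr, _, ⟨σ, -, rfl⟩, rfl⟩
    simp [norm_smul, abs_of_pos hr.1, hr.2]
  have hsub : T ⊆ Ico (1 - ε) 1 • ((↑) '' s) ∪ (1 - ε) • T := by
    rintro _ ⟨r, hr, x, hx, rfl⟩
    rcases le_or_gt (1 - ε) r with h | h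
    · exact .inl (smul_mem_smul ⟨h, hr.2⟩ hx)
    · refine .inr (mem_smul_set.2 ⟨(r / (1 - ε)) • x, smul_mem_smul
        ⟨div_pos hr.1 hε1, (div_lt_one hε1).2 h⟩ hx, ?_⟩)
      rw [smul_smul, mul_div_cancel₀ _ hε1.ne']
  have hscale : μ ((1 - ε) • T) ≤ ENNReal.ofReal (1 - ε) * μ T := by
    rw [Measure.addHaar_smul, abs_of_pos (pow_pos hε1 _)]
    gcongr
    exact pow_le_of_le_one hε1.le (by linarith [hε.1]) finrank_pos.ne'
  have hsplit : ENNReal.ofReal ε * μ T + ENNReal.ofReal (1 - ε) * μ T = μ T := by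
    rw [← add_mul, ← ENNReal.ofReal_add hε.1.le hε1.le, add_sub_cancel, ofReal_one, one_mul]
  refine (ENNReal.add_le_add_iff_right (a := ENNReal.ofReal (1 - ε) * μ T)
    (mul_ne_top ofReal_ne_top hT)).1 ?_
  calc _ = μ T := hsplit
    _ ≤ μ (Ico (1 - ε) 1 • ((↑) '' s)) + μ ((1 - ε) • T) :=
      (measure_mono hsub).trans (measure_union_le _ _)
    _ ≤ _ := by gcongr

variable {R : Set E}

lemma toSphere_mem_inter_preimage_le [FiniteDimensional ℝ E] (μ : Measure E)
    [μ.IsAddHaarMeasure] (L : E →L[ℝ] F) (hR : MeasurableSet R)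
    (hRs : ∀ x ∈ R, ∀ r : ℝ, 0 < r → r • x ∈ R) {K A : Set F} (hK : IsCompact K) (hA : IsOpen A)
    (hKA : K ⊆ A) {C : ℝ≥0∞} (h : ∀ ε ∈ Ioc (0 : ℝ) (1 / 2),
      μ (R ∩ innerShell E ε ∩ L ⁻¹' A) ≤ ENNReal.ofReal ε * C) :
    μ.toSphere {σ | (σ : E) ∈ R ∧ L σ ∈ K} ≤ finrank ℝ E * C := by
  obtain ⟨δ, hδ, hδA⟩ := hK.exists_thickening_subset_open hA hKA
  have hL : 0 < ‖L‖ + 1 := by positivity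
  set ε : ℝ := min (1 / 2) (δ / (‖L‖ + 1))
  have hε : ε ∈ Ioc (0 : ℝ) (1 / 2) := ⟨by positivity, min_le_left _ _⟩
  have hεδ : ε * (‖L‖ + 1) ≤ δ := (le_div_iff₀ hL).1 (min_le_right _ _)
  have hs : MeasurableSet {σ : sphere (0 : E) 1 | (σ : E) ∈ R ∧ L σ ∈ K} :=
    (measurable_subtype_coe hR).inter
      (hK.isClosed.preimage (L.continuous.comp continuous_subtype_val)).measurableSet
  have hsub : Ico (1 - ε) 1 • ((↑) '' {σ : sphere (0 : E) 1 | (σ : E) ∈ R ∧ L σ ∈ K} : Set E) ⊆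
      R ∩ innerShell E ε ∩ L ⁻¹' A := by
    rintro _ ⟨r, hr, _, ⟨σ, ⟨hσR, hσK⟩, rfl⟩, rfl⟩
    have hr0 : 0 < r := by linarith [hr.1, hε.2]
    have hnorm : ‖r • (σ : E)‖ = r := by simp [norm_smul, abs_of_pos hr0]
    have hfactor : L σ - r • L σ = (1 - r) • L σ := by rw [sub_smul, one_smul]
    refine ⟨⟨hRs _ hσR _ hr0, by simpa only [innerShell, mem_ofPred_eq, hnorm, mem_Ico] using hr⟩,
      hδA (mem_thickening_iff.2 ⟨L σ, hσK, ?_⟩)⟩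
    calc dist (L (r • (σ : E))) (L σ) = (1 - r) * ‖L σ‖ := by
          rw [dist_comm, dist_eq_norm, map_smul, hfactor, norm_smul,
            Real.norm_of_nonneg (sub_pos.2 hr.2).le]
      _ ≤ ε * ‖L‖ := by
          gcongr
          · linarith [hr.1]
          · simpa using L.le_opNorm σ
      _ < δ := by linarith [hε.1]
  refine (ENNReal.mul_le_mul_iff_right (by simpa using hε.1) ofReal_ne_top).1
    ((ofReal_mul_toSphere_le μ hs ⟨hε.1, hε.2.trans_lt (by norm_num)⟩).trans ?_)
  calc _ ≤ finrank ℝ E * (ENNReal.ofReal ε * C) := by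
        gcongr
        exact (measure_mono hsub).trans (h ε hε)
    _ = _ := mul_left_comm _ _ _

variable [MeasurableSpace F] [BorelSpace F] [MeasurableSpace G] [BorelSpace G]

lemma map_toSphere_restrict_le [FiniteDimensional ℝ E] [ProperSpace F] (μ : Measure E)
    [μ.IsAddHaarMeasure] (ν : Measure F) [ν.OuterRegular] (L : E →L[ℝ] F)
    (hR : MeasurableSet R) (hRs : ∀ x ∈ R, ∀ r : ℝ, 0 < r → r • x ∈ R) {C : ℝ≥0}
    (h : ∀ ε ∈ Ioc (0 : ℝ) (1 / 2), ∀ A, IsOpen A →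
      μ (R ∩ innerShell E ε ∩ L ⁻¹' A) ≤ ENNReal.ofReal ε * (C * ν A)) :
    (μ.toSphere.restrict {σ | (σ : E) ∈ R}).map
      (fun σ : sphere (0 : E) 1 => L σ) ≤
      ((finrank ℝ E * C : ℝ≥0) : ℝ≥0∞) • ν := by
  have hL : Measurable fun σ : sphere (0 : E) 1 => L σ :=
    (L.continuous.comp continuous_subtype_val).measurable
  set D : ℝ≥0 := finrank ℝ E * C
  set π := (μ.toSphere.restrict {σ | (σ : E) ∈ R}).map fun σ : sphere (0 : E) 1 => L σ
  have hopen : ∀ A, IsOpen A → π A ≤ D * ν A := by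
    intro A hA
    rw [hA.measure_eq_iSup_isCompact]
    refine iSup₂_le fun K hKA => iSup_le fun hK => ?_
    rw [Measure.map_apply hL hK.measurableSet, Measure.restrict_apply (hL hK.measurableSet),
      inter_comm]
    refine (toSphere_mem_inter_preimage_le μ L hR hRs hK hA hKA fun ε hε => h ε hε A hA).trans_eq ?_
    push_cast [D]
    ring
  have : ((D : ℝ≥0∞) • ν).OuterRegular := .smul ν coe_ne_top
  refine Measure.le_iff.2 fun s _ => ?_
  rw [s.measure_eq_iInf_isOpen ((D : ℝ≥0∞) • ν)]
  exact le_iInf₂ fun A hsA => le_iInf fun hA => (measure_mono hsA).trans (hopen A hA)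

lemma exists_measure_inter_preimage_fst_le [FiniteDimensional ℝ F] [FiniteDimensional ℝ G]
    (μ : Measure E) [μ.IsAddHaarMeasure] (ν : Measure F) [ν.IsAddHaarMeasure]
    (ρ : Measure G) [ρ.IsAddHaarMeasure] (e : (F × G) ≃L[ℝ] E) :
    ∃ κ : ℝ≥0, ∀ (T : Set E) (A : Set F) (B : ℝ≥0∞), MeasurableSet T → MeasurableSet A →
      (∀ y, ρ {z | e (y, z) ∈ T} ≤ B) → μ (T ∩ {x | (e.symm x).1 ∈ A}) ≤ κ * (B * ν A) := by
  have : FiniteDimensional ℝ E := e.toLinearEquiv.finiteDimensional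
  have : ((ν.prod ρ).map e).IsAddHaarMeasure := e.isAddHaarMeasure_map _
  obtain ⟨κ, hκ⟩ : ∃ κ : ℝ≥0, μ = κ • (ν.prod ρ).map e :=
    ⟨_, Measure.isAddLeftInvariant_eq_smul _ _⟩
  refine ⟨κ, fun T A B hT hA hB => ?_⟩
  have he : Measurable e := e.continuous.measurable
  have hTA : MeasurableSet (T ∩ {x | (e.symm x).1 ∈ A}) :=
    hT.inter (e.symm.continuous.fst.measurable hA)
  have hsection : ∀ y, ρ (Prod.mk y ⁻¹' (e ⁻¹' (T ∩ {x | (e.symm x).1 ∈ A}))) ≤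
      A.indicator (fun _ => B) y := by
    intro y
    by_cases hy : y ∈ A
    · rw [indicator_of_mem hy]
      exact (measure_mono fun z hz => hz.1).trans (hB y)
    · rw [indicator_of_notMem hy]
      refine (measure_mono_null (fun z hz => hy ?_) measure_empty).le
      simpa using hz.2
  rw [hκ, Measure.smul_apply,
    Measure.map_apply he hTA, Measure.prod_apply (he hTA), ENNReal.smul_def, smul_eq_mul]
  gcongr
  calc _ ≤ ∫⁻ y, A.indicator (fun _ => B) y ∂ν := lintegral_mono hsection
    _ = B * ν A := by rw [lintegral_indicator hA, setLIntegral_const]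

lemma exists_map_fst_toSphere_restrict_le [FiniteDimensional ℝ F] [FiniteDimensional ℝ G]
    (μ : Measure E) [μ.IsAddHaarMeasure] (ν : Measure F) [ν.IsAddHaarMeasure]
    (ρ : Measure G) [ρ.IsAddHaarMeasure] (e : (F × G) ≃L[ℝ] E)
    (hR : MeasurableSet R) (hRs : ∀ x ∈ R, ∀ r : ℝ, 0 < r → r • x ∈ R) {C : ℝ≥0}
    (h : ∀ ε ∈ Ioc (0 : ℝ) (1 / 2), ∀ y,
      ρ {z | e (y, z) ∈ R ∩ innerShell E ε} ≤ ENNReal.ofReal ε * C) :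
    ∃ D : ℝ≥0, (μ.toSphere.restrict {σ | (σ : E) ∈ R}).map
      (fun σ : sphere (0 : E) 1 => (e.symm (σ : E)).1) ≤ (D : ℝ≥0∞) • ν := by
  have : FiniteDimensional ℝ E := e.toLinearEquiv.finiteDimensional
  have : ProperSpace F := FiniteDimensional.proper ℝ F
  obtain ⟨κ, hκ⟩ := exists_measure_inter_preimage_fst_le μ ν ρ e
  refine ⟨_, map_toSphere_restrict_le μ ν
    ((ContinuousLinearMap.fst ℝ F G).comp (e.symm : E →L[ℝ] F × G)) hR hRs
    (C := κ * C) fun ε hε A hA => ?_⟩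
  refine (hκ _ A _ (hR.inter (measurableSet_innerShell ε)) hA.measurableSet (h ε hε)).trans_eq ?_
  push_cast
  ring

end Shell

section Slices

open Set Metric Module
open scoped NNReal

variable {E V : Type*} [NormedAddCommGroup E] [InnerProductSpace ℝ E]
  [NormedAddCommGroup V] [NormedSpace ℝ V] [FiniteDimensional ℝ V]
  [MeasurableSpace V]

lemma measure_norm_sq_lt_lt_top (μ : Measure V) [IsFiniteMeasureOnCompacts μ] {M : V →ₗ[ℝ] E}
    (hM : Function.Injective M) (ρ : ℝ) : μ {z | ‖M z‖ ^ 2 < ρ} < ∞ := by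
  have : ProperSpace V := FiniteDimensional.proper ℝ V
  obtain ⟨K, -, hK⟩ := M.exists_antilipschitzWith (LinearMap.ker_eq_bot.2 hM)
  have hbounded : Bornology.IsBounded (M ⁻¹' ball 0 √ρ) := hK.isBounded_preimage isBounded_ball
  refine (measure_mono fun z hz => ?_).trans_lt hbounded.measure_lt_top
  simpa using Real.lt_sqrt_of_sq_lt hz

variable [BorelSpace V]

lemma measure_norm_sq_lt_eq (μ : Measure V) [μ.IsAddHaarMeasure] (hV : finrank ℝ V = 2)
    (M : V →ₗ[ℝ] E) (ρ : ℝ) :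
    μ {z | ‖M z‖ ^ 2 < ρ} = ENNReal.ofReal ρ * μ {z | ‖M z‖ ^ 2 < 1} := by
  rcases le_or_gt ρ 0 with h | h
  · have hempty : {z | ‖M z‖ ^ 2 < ρ} = ∅ :=
      eq_empty_of_forall_notMem fun z hz => (h.trans (sq_nonneg ‖M z‖)).not_gt hz
    rw [hempty, measure_empty, ofReal_of_nonpos h, zero_mul]
  · have hs : 0 < √ρ := Real.sqrt_pos.2 h
    have hscale : {z | ‖M z‖ ^ 2 < ρ} = (fun z => (√ρ)⁻¹ • z) ⁻¹' {z | ‖M z‖ ^ 2 < 1} := by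
      ext z
      simp only [mem_ofPred_eq, mem_preimage, map_smul, norm_smul, norm_inv,
        Real.norm_of_nonneg hs.le, mul_pow, inv_pow, Real.sq_sqrt h.le]
      rw [inv_mul_lt_iff₀ h, mul_one]
    rw [hscale, Measure.addHaar_preimage_smul μ (inv_ne_zero hs.ne'), hV, inv_pow, inv_inv,
      Real.sq_sqrt h.le, abs_of_pos h]

lemma exists_measure_annulus_le (μ : Measure V) [μ.IsAddHaarMeasure] (hV : finrank ℝ V = 2)
    {M : V →ₗ[ℝ] E} (hM : Function.Injective M) :
    ∃ C : ℝ≥0, ∀ (x : E) (a b : ℝ), a ≤ b →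
      μ {z | a ≤ ‖x + M z‖ ^ 2 ∧ ‖x + M z‖ ^ 2 < b} ≤ ENNReal.ofReal (b - a) * C := by
  have hMc : Continuous M := M.continuous_of_finiteDimensional
  refine ⟨(μ {z | ‖M z‖ ^ 2 < 1}).toNNReal, fun x a b hab => ?_⟩
  rw [coe_toNNReal (measure_norm_sq_lt_lt_top μ hM 1).ne]
  obtain ⟨_, ⟨z₀, rfl⟩, w, hw, rfl⟩ := (LinearMap.range M).exists_add_mem_mem_orthogonal x
  have hpyth (z : V) : ‖M z₀ + w + M z‖ ^ 2 = ‖w‖ ^ 2 + ‖M (z₀ + z)‖ ^ 2 := by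
    rw [show M z₀ + w + M z = M (z₀ + z) + w by rw [map_add]; abel, norm_add_sq_real,
      hw _ ⟨_, rfl⟩]
    ring
  have hset : {z | a ≤ ‖M z₀ + w + M z‖ ^ 2 ∧ ‖M z₀ + w + M z‖ ^ 2 < b} =
      (fun z => z₀ + z) ⁻¹' ({z | ‖M z‖ ^ 2 < b - ‖w‖ ^ 2} \ {z | ‖M z‖ ^ 2 < a - ‖w‖ ^ 2}) := by
    ext z
    simp only [mem_ofPred_eq, hpyth, mem_preimage, mem_sdiff, not_lt, lt_sub_iff_add_lt',
      and_comm]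
  have hmeas : MeasurableSet {z | ‖M z‖ ^ 2 < a - ‖w‖ ^ 2} :=
    (isOpen_lt (by fun_prop) continuous_const).measurableSet
  rw [hset, measure_preimage_add, measure_sdiff (fun z hz => ?_) hmeas.nullMeasurableSet
      (measure_norm_sq_lt_lt_top μ hM _).ne, tsub_le_iff_right,
    measure_norm_sq_lt_eq μ hV M (b - _), measure_norm_sq_lt_eq μ hV M (a - _), ← add_mul]
  · gcongr
    rw [show b - ‖w‖ ^ 2 = b - a + (a - ‖w‖ ^ 2) by ring]
    exact ofReal_add_le
  · exact hz.out.trans_le (sub_le_sub_right hab _)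

lemma exists_measure_plane_innerShell_le (μ : Measure V) [μ.IsAddHaarMeasure]
    (hV : finrank ℝ V = 2) {M : V →ₗ[ℝ] E} (hM : Function.Injective M) :
    ∃ C : ℝ≥0, ∀ ε ∈ Ioc (0 : ℝ) 1, ∀ x,
      μ {z | x + M z ∈ innerShell E ε} ≤ ENNReal.ofReal ε * C := by
  obtain ⟨C, hC⟩ := exists_measure_annulus_le μ hV hM
  refine ⟨2 * C, fun ε hε x => ?_⟩
  calc μ {z | x + M z ∈ innerShell E ε}
      ≤ μ {z | (1 - ε) ^ 2 ≤ ‖x + M z‖ ^ 2 ∧ ‖x + M z‖ ^ 2 < 1} := by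
        refine measure_mono fun z hz => ⟨?_, (sq_lt_one_iff₀ (norm_nonneg _)).2 hz.2⟩
        exact pow_le_pow_left₀ (sub_nonneg.2 hε.2) hz.1 2
    _ ≤ ENNReal.ofReal (1 - (1 - ε) ^ 2) * C := hC x _ _ (by nlinarith [hε.1, hε.2])
    _ ≤ ENNReal.ofReal (ε * 2) * C := by
        gcongr
        linarith [sq_nonneg ε]
    _ = _ := by
        rw [ofReal_mul hε.1.le]
        push_cast
        rw [ofReal_ofNat, mul_assoc]

/-- The double cone of directions transversal to `v`: a line in direction `v` meets the spheres
centred at `0` at a definite angle at the points of this cone. -/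
def transversalCone (v : E) (c : ℝ) : Set E := {x | c * ‖x‖ ≤ |inner ℝ v x|}

lemma measurableSet_transversalCone [MeasurableSpace E] [OpensMeasurableSpace E] (v : E) (c : ℝ) :
    MeasurableSet (transversalCone v c) :=
  (isClosed_le (by fun_prop) (by fun_prop)).measurableSet

lemma smul_mem_transversalCone {v x : E} {c : ℝ} (hx : x ∈ transversalCone v c) (r : ℝ) :
    r • x ∈ transversalCone v c := by
  have hx' : c * ‖x‖ ≤ |inner ℝ v x| := hx
  calc c * ‖r • x‖ = |r| * (c * ‖x‖) := by rw [norm_smul, Real.norm_eq_abs]; ring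
    _ ≤ |r| * |inner ℝ v x| := by gcongr
    _ = |inner ℝ v (r • x)| := by rw [inner_smul_right, abs_mul]

lemma exists_pos_forall_exists_mem_transversalCone {ι : Type*} [Finite ι] [Nonempty ι]
    (b : Basis ι ℝ E) : ∃ c > 0, ∀ x, ∃ i, x ∈ transversalCone (b i) c := by
  have : Fintype ι := Fintype.ofFinite ι
  have : FiniteDimensional ℝ E := b.finiteDimensional_of_finite
  let A : E →ₗ[ℝ] ι → ℝ := LinearMap.pi fun i => innerₛₗ ℝ (b i)
  have hA : LinearMap.ker A = ⊥ := LinearMap.ker_eq_bot'.2 fun x hx =>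
    InnerProductSpace.ext_inner_left_basis b fun i => by simpa [A] using congrFun hx i
  obtain ⟨K, hK, hAK⟩ := A.exists_antilipschitzWith hA
  refine ⟨(K : ℝ)⁻¹, by positivity, fun x => ?_⟩
  obtain ⟨i, hi⟩ := Finite.exists_max fun i => ‖A x i‖
  suffices h : (K : ℝ)⁻¹ * ‖x‖ ≤ ‖A x i‖ from ⟨i, h⟩
  rw [inv_mul_le_iff₀ (NNReal.coe_pos.2 hK)]
  calc ‖x‖ ≤ K * ‖A x‖ := by simpa only [dist_zero_right, map_zero] using hAK.le_mul_dist x 0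
    _ ≤ K * ‖A x i‖ := by
        gcongr
        exact (pi_norm_le_iff_of_nonneg (norm_nonneg _)).2 hi

lemma abs_sub_mul_le_of_mem_innerShell {x v : E} {c ε s t t' : ℝ} (hε : ε ∈ Ioc (0 : ℝ) (1 / 2))
    (hs : |s| = 1) (ht : c * ‖x + t • v‖ ≤ s * inner ℝ v (x + t • v))
    (ht' : c * ‖x + t' • v‖ ≤ s * inner ℝ v (x + t' • v)) (hxt : x + t • v ∈ innerShell E ε)
    (hxt' : x + t' • v ∈ innerShell E ε) (hc : 0 < c) : |t - t'| * c ≤ 2 * ε := by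
  obtain ⟨hε0, hε1⟩ := hε
  obtain ⟨hp1, hp2⟩ := hxt
  obtain ⟨hq1, hq2⟩ := hxt'
  have hsq (p q : E) : inner ℝ (p - q) (p + q) = ‖p‖ ^ 2 - ‖q‖ ^ 2 := by
    rw [inner_sub_left, inner_add_right, inner_add_right, real_inner_self_eq_norm_sq,
      real_inner_self_eq_norm_sq, real_inner_comm p q]
    ring
  have hdiff : (t - t') • v = (x + t • v) - (x + t' • v) := by rw [sub_smul]; abel
  set p := x + t • v
  set q := x + t' • v
  have hinner : (t - t') * inner ℝ v (p + q) = ‖p‖ ^ 2 - ‖q‖ ^ 2 := by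
    rw [← real_inner_smul_left, hdiff, hsq]
  have hlow : c ≤ |inner ℝ v (p + q)| := calc
    c ≤ s * inner ℝ v (p + q) := by rw [inner_add_right]; nlinarith
    _ ≤ |s * inner ℝ v (p + q)| := le_abs_self _
    _ = |inner ℝ v (p + q)| := by rw [abs_mul, hs, one_mul]
  calc |t - t'| * c ≤ |t - t'| * |inner ℝ v (p + q)| := by gcongr
    _ = |‖p‖ ^ 2 - ‖q‖ ^ 2| := by rw [← abs_mul, hinner]
    _ ≤ 2 * ε := abs_le.2 ⟨by nlinarith, by nlinarith⟩

lemma volume_line_transversalCone_inter_innerShell_le (v x : E) {c ε : ℝ} (hc : 0 < c)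
    (hε : ε ∈ Ioc (0 : ℝ) (1 / 2)) :
    volume {t : ℝ | x + t • v ∈ transversalCone v c ∩ innerShell E ε} ≤
      ENNReal.ofReal ε * ENNReal.ofReal (4 / c) := by
  set half : ℝ → Set ℝ := fun s =>
    {t | c * ‖x + t • v‖ ≤ s * inner ℝ v (x + t • v) ∧ x + t • v ∈ innerShell E ε}
  have hhalf {s : ℝ} (hs : |s| = 1) : volume (half s) ≤ ENNReal.ofReal (2 * ε / c) :=
    (Real.volume_le_diam _).trans <| ediam_le_of_forall_dist_le fun t ht t' ht' =>
      (le_div_iff₀ hc).2 (abs_sub_mul_le_of_mem_innerShell hε hs ht.1 ht'.1 ht.2 ht'.2 hc)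
  have hsub : {t : ℝ | x + t • v ∈ transversalCone v c ∩ innerShell E ε} ⊆
      half 1 ∪ half (-1) := by
    rintro t ⟨ht, hshell⟩
    rcases le_abs.1 ht.out with h | h
    · exact .inl ⟨by simpa using h, hshell⟩
    · exact .inr ⟨by simpa using h, hshell⟩
  have hε0 : 0 < ε := hε.1
  calc _ ≤ volume (half 1) + volume (half (-1)) :=
        (measure_mono hsub).trans (measure_union_le _ _)
    _ ≤ ENNReal.ofReal (2 * ε / c) + ENNReal.ofReal (2 * ε / c) :=
        add_le_add (hhalf (by simp)) (hhalf (by simp))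
    _ = ENNReal.ofReal ε * ENNReal.ofReal (4 / c) := by
        rw [← ofReal_add (by positivity) (by positivity), ← ofReal_mul hε0.le]
        congr 1
        ring

end Slices

section Tonelli

lemma lintegral_pi_fin_prod_eq_prod {n : ℕ} {X : Fin n → Type*} [∀ i, MeasurableSpace (X i)]
    (μ : ∀ i, Measure (X i)) [∀ i, SigmaFinite (μ i)] {f : ∀ i, X i → ℝ≥0∞}
    (hf : ∀ i, Measurable (f i)) :
    ∫⁻ x, ∏ i, f i (x i) ∂Measure.pi μ = ∏ i, ∫⁻ x, f i x ∂μ i := by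
  induction n with
  | zero => simp
  | succ n ih =>
    have htail : Measurable fun y : (∀ i : Fin n, X i.succ) => ∏ i, f i.succ (y i) :=
      Finset.measurable_fun_prod _ fun i _ => (hf i.succ).comp (measurable_pi_apply i)
    rw [← ((measurePreserving_piFinSuccAbove μ 0).symm).lintegral_comp_emb
      (MeasurableEquiv.measurableEmbedding _)]
    simp_rw [MeasurableEquiv.piFinSuccAbove_symm_apply, Fin.insertNthEquiv, Fin.prod_univ_succ,
      Fin.insertNth_zero, Equiv.coe_fn_mk, Fin.cons_succ, Fin.cons_zero]
    change ∫⁻ z : X 0 × (∀ i : Fin n, X i.succ), f 0 z.1 * ∏ i, f i.succ (z.2 i)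
      ∂(μ 0).prod (Measure.pi fun i => μ i.succ) = _
    rw [lintegral_prod_mul (hf 0).aemeasurable htail.aemeasurable, ih _ fun i => hf i.succ]

lemma lintegral_pi_prod_eq_prod {ι : Type*} [Fintype ι] {X : ι → Type*}
    [∀ i, MeasurableSpace (X i)] (μ : ∀ i, Measure (X i)) [∀ i, SigmaFinite (μ i)]
    {f : ∀ i, X i → ℝ≥0∞} (hf : ∀ i, Measurable (f i)) :
    ∫⁻ x, ∏ i, f i (x i) ∂Measure.pi μ = ∏ i, ∫⁻ x, f i x ∂μ i := by
  let e := (Fintype.equivFin ι).symm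
  rw [← (measurePreserving_piCongrLeft μ e).lintegral_comp_emb
    (MeasurableEquiv.measurableEmbedding _)]
  simp_rw [← e.prod_comp, MeasurableEquiv.coe_piCongrLeft, Equiv.piCongrLeft_apply_apply]
  exact lintegral_pi_fin_prod_eq_prod _ fun i => hf (e i)

end Tonelli

section FormBound

open scoped NNReal

variable {ι Ω X : Type*} [MeasurableSpace Ω] [MeasurableSpace X]

/-- The multilinear form `f ↦ ∫ ∏_{l ∈ S} f_l(Y_l) dν` is bounded by `C` on `L^p(μ)^S`. For `p = 1`
and `μ` σ-finite this says that the joint law of `(Y_l)_{l ∈ S}` has density at most `C` with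
respect to the product measure. -/
def FormBound (ν : Measure Ω) (Y : ι → Ω → X) (μ : Measure X) (S : Finset ι) (p : ℝ) (C : ℝ≥0) :
    Prop :=
  ∀ f : ι → X → ℝ≥0∞, (∀ l, Measurable (f l)) →
    ∫⁻ ω, ∏ l ∈ S, f l (Y l ω) ∂ν ≤ C * ∏ l ∈ S, (∫⁻ x, f l x ^ p ∂μ) ^ (1 / p)

namespace FormBound

variable {ν : Measure Ω} {Y : ι → Ω → X} {μ : Measure X} {S : Finset ι} {p : ℝ} {C : ℝ≥0}

lemma mono (h : FormBound ν Y μ S p C) {ν' : Measure Ω} (hν : ν' ≤ ν) {C' : ℝ≥0} (hC : C ≤ C') :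
    FormBound ν' Y μ S p C' := fun f hf =>
  (lintegral_mono' hν le_rfl).trans ((h f hf).trans (by gcongr))

lemma of_iUnion_eq_univ {κ : Type*} [Fintype κ] {R : κ → Set Ω} (hR : ⋃ i, R i = Set.univ)
    {C : κ → ℝ≥0} (h : ∀ i, FormBound (ν.restrict (R i)) Y μ S p (C i)) :
    FormBound ν Y μ S p (∑ i, C i) := fun f hf => by
  calc ∫⁻ ω, ∏ l ∈ S, f l (Y l ω) ∂ν
      = ∫⁻ ω in ⋃ i, R i, ∏ l ∈ S, f l (Y l ω) ∂ν := by rw [hR, Measure.restrict_univ]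
    _ ≤ ∑ i, ∫⁻ ω in R i, ∏ l ∈ S, f l (Y l ω) ∂ν := by
        rw [← tsum_fintype (L := .unconditional κ)]
        exact lintegral_iUnion_le R _
    _ ≤ ∑ i, C i * ∏ l ∈ S, (∫⁻ x, f l x ^ p ∂μ) ^ (1 / p) :=
        Finset.sum_le_sum fun i _ => h i f hf
    _ = _ := by rw [← Finset.sum_mul, ofNNReal_finsetSum]

lemma of_map_le [SigmaFinite μ] (hY : ∀ l, Measurable (Y l))
    (h : ν.map (fun ω (l : S) => Y l ω) ≤ (C : ℝ≥0∞) • Measure.pi fun _ : S => μ) :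
    FormBound ν Y μ S 1 C := fun f hf => by
  have hprod : Measurable fun y : S → X => ∏ l : S, f l (y l) :=
    Finset.measurable_fun_prod _ fun l _ => (hf l).comp (measurable_pi_apply l)
  calc ∫⁻ ω, ∏ l ∈ S, f l (Y l ω) ∂ν = ∫⁻ ω, ∏ l : S, f l (Y l ω) ∂ν :=
        lintegral_congr fun ω => (Finset.prod_coe_sort S fun l => f l (Y l ω)).symm
    _ = ∫⁻ y, ∏ l : S, f l (y l) ∂ν.map fun ω (l : S) => Y l ω :=
        (lintegral_map hprod (measurable_pi_lambda _ fun l => hY l)).symm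
    _ ≤ ∫⁻ y, ∏ l : S, f l (y l) ∂((C : ℝ≥0∞) • Measure.pi fun _ : S => μ) :=
        lintegral_mono' h le_rfl
    _ = C * ∏ l : S, ∫⁻ x, f l x ∂μ := by
        rw [lintegral_smul_measure, lintegral_pi_prod_eq_prod _ fun l : S => hf l, smul_eq_mul]
    _ = _ := by
        simp only [rpow_one, div_one]
        rw [Finset.prod_coe_sort S fun l => ∫⁻ x, f l x ∂μ]

end FormBound

lemma rpow_sum_of_nonneg {α : Type*} (u : ℝ≥0∞) (s : Finset α) {θ : α → ℝ}
    (hθ : ∀ a ∈ s, 0 ≤ θ a) : u ^ (∑ a ∈ s, θ a) = ∏ a ∈ s, u ^ θ a := by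
  induction s using Finset.cons_induction with
  | empty => simp
  | cons a s ha ih =>
    rw [Finset.sum_cons, Finset.prod_cons, rpow_add_of_nonneg _ _ (hθ a (s.mem_cons_self a))
      (Finset.sum_nonneg fun b hb => hθ b (Finset.mem_cons_of_mem hb)),
      ih fun b hb => hθ b (Finset.mem_cons_of_mem hb)]

variable [Fintype ι]

lemma prod_prod_rpow_eq_prod_rpow_sum [DecidableEq ι] {α : Type*} [Fintype α] (T : α → Finset ι)
    {θ : α → ℝ} (hθ : ∀ a, 0 ≤ θ a) (u : ι → ℝ≥0∞) :
    ∏ a, (∏ l ∈ T a, u l) ^ θ a = ∏ l, u l ^ ∑ a with l ∈ T a, θ a := by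
  simp_rw [rpow_sum_of_nonneg _ _ fun a _ => hθ a, ← prod_rpow_of_nonneg (hθ _)]
  exact Finset.prod_comm' fun a l => by simp

variable {ν : Measure Ω} {Y : ι → Ω → X} {μ : Measure X} {C : ℝ≥0}

lemma FormBound.interpolate [DecidableEq ι] (hY : ∀ l, Measurable (Y l)) {α : Type*} [Fintype α]
    {T : α → Finset ι} {θ : α → ℝ} (hθ : ∀ a, 0 ≤ θ a) (hθ1 : ∑ a, θ a = 1) {p : ℝ} (hp : 0 < p)
    (hθT : ∀ l, ∑ a with l ∈ T a, θ a = 1 / p) (h : ∀ a, FormBound ν Y μ (T a) 1 C) :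
    FormBound ν Y μ Finset.univ p C := fun f hf => by
  have hfp : ∀ l, Measurable fun x => f l x ^ p := fun l => (hf l).pow_const p
  have hregroup (u : ι → ℝ≥0∞) : ∏ a, (∏ l ∈ T a, u l) ^ θ a = ∏ l, u l ^ (1 / p) := by
    simp_rw [prod_prod_rpow_eq_prod_rpow_sum T hθ, hθT]
  calc ∫⁻ ω, ∏ l, f l (Y l ω) ∂ν = ∫⁻ ω, ∏ a, (∏ l ∈ T a, f l (Y l ω) ^ p) ^ θ a ∂ν := by
        simp_rw [hregroup, ← rpow_mul, mul_one_div_cancel hp.ne', rpow_one]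
    _ ≤ ∏ a, (∫⁻ ω, ∏ l ∈ T a, f l (Y l ω) ^ p ∂ν) ^ θ a :=
        lintegral_prod_norm_pow_le _ (fun a _ => (Finset.measurable_fun_prod _ fun l _ =>
          (hfp l).comp (hY l)).aemeasurable) hθ1 fun a _ => hθ a
    _ ≤ ∏ a, (C * ∏ l ∈ T a, ∫⁻ x, f l x ^ p ∂μ) ^ θ a := by
        refine Finset.prod_le_prod' fun a _ => rpow_le_rpow ?_ (hθ a)
        simpa only [rpow_one, div_one] using h a (fun l x => f l x ^ p) hfp
    _ = C * ∏ l, (∫⁻ x, f l x ^ p ∂μ) ^ (1 / p) := by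
        simp_rw [mul_rpow_of_nonneg _ _ (hθ _), Finset.prod_mul_distrib, hregroup,
          ← rpow_sum_of_nonneg _ _ fun a _ => hθ a, hθ1, rpow_one]

lemma exists_perm_apply_eq_self_iff (hι : 3 ≤ Fintype.card ι) (i : ι) :
    ∃ σ : Equiv.Perm ι, ∀ a, σ a = a ↔ a = i := by
  classical
  obtain ⟨σ, hσ, hsupp⟩ := Finset.exists_cycleOn (Finset.univ.erase i)
  have hnontrivial : (Finset.univ.erase i).Nontrivial := by
    rw [← Finset.one_lt_card_iff_nontrivial, Finset.card_erase_of_mem (Finset.mem_univ i),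
      Finset.card_univ]
    omega
  refine ⟨σ, fun a => ⟨fun ha => ?_, ?_⟩⟩
  · by_contra hai
    exact hσ.apply_ne hnontrivial (by simpa using hai) ha
  · rintro rfl
    exact Equiv.Perm.notMem_support.1 fun ha => Finset.notMem_erase a _ (hsupp ha)

lemma FormBound.of_erase_of_pairs [DecidableEq ι] (hY : ∀ l, Measurable (Y l))
    (hι : 3 ≤ Fintype.card ι) (i : ι) (h1 : FormBound ν Y μ (Finset.univ \ {i}) 1 C)
    (h2 : ∀ j k, j ≠ k → FormBound ν Y μ (Finset.univ \ {j, k}) 1 C) :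
    FormBound ν Y μ Finset.univ ((Fintype.card ι + 1) / (Fintype.card ι - 1)) C := by
  obtain ⟨σ, hσ⟩ := exists_perm_apply_eq_self_iff hι i
  set N : ℝ := (Fintype.card ι : ℝ)
  have hN : 3 ≤ N := Nat.ofNat_le_cast.2 hι
  have hN1 : N + 1 ≠ 0 := by positivity
  -- With weight `2 / (N + 1)` at `a = i` and `1 / (N + 1)` elsewhere, the sets `univ \ {a, σ a}`
  -- cover each index with total weight `(N - 1) / (N + 1)`.
  let θ : ι → ℝ := fun a => (1 + if a = i then 1 else 0) / (N + 1)
  have hθ1 : ∑ a, θ a = 1 := by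
    rw [← Finset.sum_div, Finset.sum_add_distrib, Finset.sum_ite_eq' Finset.univ i,
      if_pos (Finset.mem_univ i), Finset.sum_const, Finset.card_univ, nsmul_one, div_self hN1]
  have hpair (l : ι) : ∑ a ∈ {l, σ.symm l}, θ a = 2 / (N + 1) := by
    rcases eq_or_ne l i with rfl | hl
    · rw [σ.symm_apply_eq.2 ((hσ l).2 rfl).symm, Finset.pair_eq_singleton, Finset.sum_singleton]
      simp only [θ, if_true]
      norm_num
    · have hσl : σ.symm l ≠ l := fun h => hl ((hσ l).1 (σ.symm_apply_eq.1 h).symm)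
      have hσi : σ.symm l ≠ i := fun h => hl ((σ.symm_apply_eq.1 h).trans ((hσ i).2 rfl))
      rw [Finset.sum_pair hσl.symm]
      simp only [θ, if_neg hl, if_neg hσi]
      ring
  refine interpolate hY (T := fun a => Finset.univ \ {a, σ a}) (θ := θ)
    (fun a => by dsimp only [θ]; positivity) hθ1 (div_pos (by linarith) (by linarith))
    (fun l => ?_) fun a => ?_
  · have hcompl : ({a | l ∈ Finset.univ \ {a, σ a}} : Finset ι) = {l, σ.symm l}ᶜ := by
      ext a
      simp only [Finset.mem_filter, Finset.mem_univ, true_and, Finset.mem_sdiff, Finset.mem_compl,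
        Finset.mem_insert, Finset.mem_singleton, Equiv.eq_symm_apply, eq_comm (a := l)]
    rw [hcompl, eq_sub_of_add_eq (Finset.sum_compl_add_sum {l, σ.symm l} θ), hθ1, hpair,
      one_div_div]
    field_simp
    ring
  · rcases eq_or_ne a i with rfl | ha
    · rwa [(hσ a).2 rfl, Finset.pair_eq_singleton]
    · exact h2 a (σ a) fun h => ha ((hσ a).1 h.symm)

end FormBound

section Sphere

open Set Metric Module
open scoped NNReal

variable {ι E : Type*} [Fintype ι] [NormedAddCommGroup E]

lemma exists_continuousLinearEquiv_prod_repr [NormedSpace ℝ E] [DecidableEq ι] (b : Basis ι ℝ E)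
    (S : Finset ι) : ∃ e : ((S → ℝ) × ({l // l ∉ S} → ℝ)) ≃L[ℝ] E,
      (∀ y z, e (y, z) = ∑ l, y l • b l + ∑ l, z l • b l) ∧
        ∀ x (l : S), (e.symm x).1 l = b.repr x l := by
  let b' : Basis (S ⊕ {l // l ∉ S}) ℝ E := b.reindex (Equiv.sumCompl (· ∈ S)).symm
  have : FiniteDimensional ℝ E := b.finiteDimensional_of_finite
  let e : E ≃ₗ[ℝ] (S → ℝ) × ({l // l ∉ S} → ℝ) :=
    b'.equivFun.trans (LinearEquiv.sumArrowLequivProdArrow _ _ ℝ ℝ)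
  refine ⟨e.symm.toContinuousLinearEquiv, fun y z => ?_, fun x l => ?_⟩
  · change b'.equivFun.symm (Sum.elim y z) = _
    rw [b'.equivFun_symm_apply, Fintype.sum_sum_type]
    simp [b']
  · simp [e, b']

variable [MeasurableSpace E] [BorelSpace E]

lemma measurable_repr_sphere {ι : Type*} [Finite ι] [NormedSpace ℝ E] (b : Basis ι ℝ E) (l : ι) :
    Measurable fun σ : sphere (0 : E) 1 => b.repr (σ : E) l :=
  have : FiniteDimensional ℝ E := b.finiteDimensional_of_finite
  ((b.coord l).continuous_of_finiteDimensional.comp continuous_subtype_val).measurable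

lemma exists_formBound_toSphere_restrict [NormedSpace ℝ E] [DecidableEq ι] (b : Basis ι ℝ E)
    (μ : Measure E) [μ.IsAddHaarMeasure] {S : Finset ι} {R : Set E} (hR : MeasurableSet R)
    (hRs : ∀ x ∈ R, ∀ r : ℝ, 0 < r → r • x ∈ R) {C : ℝ≥0}
    (h : ∀ ε ∈ Ioc (0 : ℝ) (1 / 2), ∀ x : E, volume {z : {l // l ∉ S} → ℝ |
      x + ∑ l, z l • b l ∈ R ∩ innerShell E ε} ≤ ENNReal.ofReal ε * C) :
    ∃ D : ℝ≥0, FormBound (μ.toSphere.restrict {σ | (σ : E) ∈ R})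
      (fun l (σ : sphere (0 : E) 1) => b.repr (σ : E) l) volume S 1 D := by
  have : FiniteDimensional ℝ E := b.finiteDimensional_of_finite
  obtain ⟨e, he, hfst⟩ := exists_continuousLinearEquiv_prod_repr b S
  obtain ⟨D, hD⟩ := exists_map_fst_toSphere_restrict_le μ volume volume e hR hRs fun ε hε y => by
    simpa only [he] using h ε hε (∑ l, y l • b l)
  have hcoord : (fun (σ : sphere (0 : E) 1) (l : S) => b.repr (σ : E) l) =
      fun σ : sphere (0 : E) 1 => (e.symm (σ : E)).1 :=
    funext fun σ => funext fun l => (hfst σ l).symm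
  exact ⟨D, .of_map_le (measurable_repr_sphere b) (by rwa [hcoord])⟩

variable [InnerProductSpace ℝ E]

lemma exists_formBound_toSphere_univ_sdiff_singleton [DecidableEq ι] (b : Basis ι ℝ E)
    (μ : Measure E) [μ.IsAddHaarMeasure] {c : ℝ} (hc : 0 < c) (i : ι) :
    ∃ D : ℝ≥0, FormBound (μ.toSphere.restrict {σ | (σ : E) ∈ transversalCone (b i) c})
      (fun l (σ : sphere (0 : E) 1) => b.repr (σ : E) l) volume (Finset.univ \ {i}) 1 D := by
  refine exists_formBound_toSphere_restrict b μ (measurableSet_transversalCone _ _)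
    (fun x hx r _ => smul_mem_transversalCone hx r) (C := (4 / c).toNNReal) fun ε hε x => ?_
  let _ : Unique {l // l ∉ Finset.univ \ {i}} := ⟨⟨⟨i, by simp⟩⟩, fun l => by grind⟩
  simp only [Fintype.sum_unique]
  have hline := (volume_preserving_piUnique fun _ : {l // l ∉ Finset.univ \ {i}} => ℝ)
    |>.measure_preimage_equiv {t | x + t • b i ∈ transversalCone (b i) c ∩ innerShell E ε}
  exact hline.trans_le (volume_line_transversalCone_inter_innerShell_le (b i) x hc hε)

lemma exists_formBound_toSphere_univ_sdiff_pair [DecidableEq ι] (b : Basis ι ℝ E) (μ : Measure E)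
    [μ.IsAddHaarMeasure] {j k : ι} (hjk : j ≠ k) :
    ∃ D : ℝ≥0, FormBound μ.toSphere (fun l (σ : sphere (0 : E) 1) => b.repr (σ : E) l) volume
      (Finset.univ \ {j, k}) 1 D := by
  have hrank : finrank ℝ ({l // l ∉ Finset.univ \ {j, k}} → ℝ) = 2 := by
    rw [finrank_fintype_fun_eq_card,
      Fintype.card_of_subtype {j, k} (by grind), Finset.card_pair hjk]
  obtain ⟨C, hC⟩ := exists_measure_plane_innerShell_le volume hrank
    (b.linearIndependent.comp _ Subtype.val_injective).fintypeLinearCombination_injective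
  simpa using exists_formBound_toSphere_restrict b μ .univ (fun _ _ _ _ => mem_univ _)
    fun ε hε x => by
      simpa only [univ_inter, Fintype.linearCombination_apply,
        Function.comp_apply] using hC ε ⟨hε.1, hε.2.trans (by norm_num)⟩ x

theorem exists_formBound_toSphere (b : Basis ι ℝ E) (μ : Measure E) [μ.IsAddHaarMeasure]
    (hι : 3 ≤ Fintype.card ι) :
    ∃ D : ℝ≥0, FormBound μ.toSphere (fun l (σ : sphere (0 : E) 1) => b.repr (σ : E) l) volume
      Finset.univ ((Fintype.card ι + 1) / (Fintype.card ι - 1)) D := by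
  classical
  have : Nonempty ι := Fintype.card_pos_iff.1 (by omega)
  obtain ⟨c, hc, hcone⟩ := exists_pos_forall_exists_mem_transversalCone b
  choose D₁ hD₁ using exists_formBound_toSphere_univ_sdiff_singleton b μ hc
  choose! D₂ hD₂ using fun j k : ι =>
    exists_formBound_toSphere_univ_sdiff_pair b μ (j := j) (k := k)
  obtain ⟨M₁, hM₁⟩ := Finite.exists_le D₁
  obtain ⟨M₂, hM₂⟩ := Finite.exists_le fun p : ι × ι => D₂ p.1 p.2
  refine ⟨_, FormBound.of_iUnion_eq_univ
    (R := fun i => {σ : sphere (0 : E) 1 | (σ : E) ∈ transversalCone (b i) c})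
    (iUnion_eq_univ_iff.2 fun σ => hcone σ) (C := fun _ => max M₁ M₂) fun i => ?_⟩
  refine .of_erase_of_pairs (measurable_repr_sphere b) hι i ?_ fun j k hjk => ?_
  · exact (hD₁ i).mono le_rfl ((hM₁ i).trans (le_max_left _ _))
  · exact (hD₂ j k hjk).mono Measure.restrict_le_self ((hM₂ (j, k)).trans (le_max_right _ _))

end Sphere

section Duality

variable {X : Type*} [MeasurableSpace X] {μ : Measure X} [SigmaFinite μ]

lemma exists_measurable_le_lintegral_lt_top {f : X → ℝ≥0∞} {L : ℝ≥0∞} (hL : L < ∫⁻ x, f x ∂μ) :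
    ∃ h : X → ℝ≥0∞, Measurable h ∧ h ≤ f ∧ ∫⁻ x, h x ∂μ < ∞ ∧ L < ∫⁻ x, h x ∂μ := by
  simp_rw [lintegral_eq_nnreal, lt_iSup_iff] at hL
  obtain ⟨φ, hφf, hLφ⟩ := hL
  rw [← SimpleFunc.lintegral_eq_lintegral] at hLφ
  obtain ⟨h, hhφ, hfin, hLh⟩ := SimpleFunc.exists_lt_lintegral_simpleFunc_of_lt_lintegral hLφ
  exact ⟨fun x => h x, h.measurable.coe_nnreal_ennreal,
    fun x => (coe_le_coe.2 (hhφ x)).trans (hφf x), hfin, hLh⟩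

lemma lintegral_rpow_le_of_forall_lintegral_mul_le {r s : ℝ} (hrs : r.HolderConjugate s)
    {F : X → ℝ≥0∞} {A : ℝ≥0∞} (h : ∀ g : X → ℝ≥0∞, Measurable g →
      ∫⁻ x, g x * F x ∂μ ≤ A * (∫⁻ x, g x ^ s ∂μ) ^ (1 / s)) :
    (∫⁻ x, F x ^ r ∂μ) ^ (1 / r) ≤ A := by
  have hr : 0 < r := hrs.pos
  have hs : 0 < s := hrs.symm.pos
  have hsplit (u : ℝ≥0∞) : u ^ (1 / r) * u ^ (1 / s) = u := by
    rw [← rpow_add_of_nonneg _ _ (by positivity) (by positivity), one_div, one_div,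
      hrs.inv_add_inv_eq_one, rpow_one]
  have hroot {u v : ℝ≥0∞} : u ^ (1 / r) ≤ v ↔ u ≤ v ^ r := by rw [one_div, rpow_inv_le_iff hr]
  refine hroot.2 (le_of_not_gt fun hA => ?_)
  obtain ⟨k, hk, hkF, hfin, hAk⟩ := exists_measurable_le_lintegral_lt_top hA
  have htest : (∫⁻ x, k x ∂μ) ^ (1 / r) * (∫⁻ x, k x ∂μ) ^ (1 / s) ≤
      A * (∫⁻ x, k x ∂μ) ^ (1 / s) := calc
    _ = ∫⁻ x, k x ^ (1 / s) * k x ^ (1 / r) ∂μ := by simp_rw [mul_comm (_ ^ (1 / s)), hsplit]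
    _ ≤ ∫⁻ x, k x ^ (1 / s) * F x ∂μ := by
      gcongr with x
      exact hroot.2 (hkF x)
    _ ≤ A * (∫⁻ x, (k x ^ (1 / s)) ^ s ∂μ) ^ (1 / s) := h _ (hk.pow_const _)
    _ = _ := by simp_rw [← rpow_mul, one_div_mul_cancel hs.ne', rpow_one]
  have hpos : (∫⁻ x, k x ∂μ) ^ (1 / s) ≠ 0 := (rpow_pos (pos_of_gt hAk) hfin.ne).ne'
  have htop : (∫⁻ x, k x ∂μ) ^ (1 / s) ≠ ∞ := rpow_ne_top_of_nonneg (by positivity) hfin.ne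
  exact hAk.not_ge (hroot.1 ((ENNReal.mul_le_mul_iff_left hpos htop).1 htest))

end Duality

section Average

open scoped NNReal

lemma FormBound.lintegral_prod_add_le {ι Ω X : Type*} [MeasurableSpace Ω] [MeasurableSpace X]
    [AddGroup X] [MeasurableAdd X] {τ : Measure Ω} {μ : Measure X} [μ.IsAddLeftInvariant]
    {Y : ι → Ω → X} {S : Finset ι} {p : ℝ} {C : ℝ≥0} (h : FormBound τ Y μ S p C)
    {f : ι → X → ℝ≥0∞} (hf : ∀ l, Measurable (f l)) (z : X) :
    ∫⁻ ω, ∏ l ∈ S, f l (z + Y l ω) ∂τ ≤ C * ∏ l ∈ S, (∫⁻ x, f l x ^ p ∂μ) ^ (1 / p) := by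
  refine (h (fun l x => f l (z + x)) fun l => (hf l).comp (measurable_const_add z)).trans_eq ?_
  congr! 3 with l
  exact lintegral_add_left_eq_self (fun x => f l x ^ p) z

variable {ι X : Type*} [DecidableEq ι] [AddCommGroup X]

/-- The involution `y ↦ (y_m - y_l)_{l ≠ m}` of `X^ι`, leaving the coordinate `m` unchanged. It
describes the arguments `x - y_l` of an average after the change of variables `x = z + y_m`. -/
def pivot (m : ι) (y : ι → X) : ι → X := Function.update (fun l => y m - y l) m (y m)

lemma pivot_pivot (m : ι) (y : ι → X) : pivot m (pivot m y) = y := by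
  ext l
  rcases eq_or_ne l m with rfl | hl
  · simp [pivot]
  · simp [pivot, hl]

lemma mul_prod_sub_eq_mul_prod_update [Fintype ι] (f : ι → X → ℝ≥0∞) (g : X → ℝ≥0∞) (m : ι)
    (y : ι → X) (z : X) : g (z + y m) * ∏ l, f l (z + y m - y l) =
      f m z * ∏ l, Function.update f m g l (z + pivot m y l) := by
  rw [← Finset.mul_prod_erase _ _ (Finset.mem_univ m), add_sub_cancel_right, mul_left_comm,
    ← Finset.mul_prod_erase Finset.univ (fun l => Function.update f m g l _) (Finset.mem_univ m),
    Function.update_self, pivot, Function.update_self]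
  refine congr_arg (fun u => f m z * (g _ * u)) (Finset.prod_congr rfl fun l hl => ?_)
  rw [Function.update_of_ne (Finset.ne_of_mem_erase hl),
    Function.update_of_ne (Finset.ne_of_mem_erase hl), add_sub_assoc]

variable {Ω : Type*} [MeasurableSpace Ω] [MeasurableSpace X] [MeasurableSub₂ X]
  {τ : Measure Ω} [SFinite τ] {μ : Measure X} [μ.IsAddLeftInvariant] {Y : ι → Ω → X}

lemma measurable_pivot_apply (hY : ∀ l, Measurable (Y l)) (m l : ι) :
    Measurable fun ω => pivot m (fun k => Y k ω) l := by
  rcases eq_or_ne l m with rfl | hl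
  · simpa [pivot] using hY l
  · simpa [pivot, hl] using! (hY m).sub (hY l)

variable [Fintype ι] [MeasurableAdd₂ X]

lemma lintegral_mul_lintegral_prod_sub [SFinite μ] (hY : ∀ l, Measurable (Y l))
    {f : ι → X → ℝ≥0∞} (hf : ∀ l, Measurable (f l)) {g : X → ℝ≥0∞} (hg : Measurable g) (m : ι) :
    ∫⁻ x, g x * ∫⁻ ω, ∏ l, f l (x - Y l ω) ∂τ ∂μ =
      ∫⁻ z, f m z * ∫⁻ ω, ∏ l, Function.update f m g l (z + pivot m (fun k => Y k ω) l) ∂τ ∂μ := by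
  have hfg : ∀ l, Measurable (Function.update f m g l) :=
    (Function.forall_update_iff f fun _ => Measurable).2 ⟨hg, fun l _ => hf l⟩
  have hprod : Measurable fun p : X × Ω => ∏ l, f l (p.1 - Y l p.2) :=
    Finset.measurable_fun_prod _ fun l _ =>
      (hf l).comp (measurable_fst.sub ((hY l).comp measurable_snd))
  have hprod' : Measurable fun p : X × Ω =>
      ∏ l, Function.update f m g l (p.1 + pivot m (fun k => Y k p.2) l) :=
    Finset.measurable_fun_prod _ fun l _ =>
      (hfg l).comp (measurable_fst.add ((measurable_pivot_apply hY m l).comp measurable_snd))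
  calc _ = ∫⁻ x, ∫⁻ ω, g x * ∏ l, f l (x - Y l ω) ∂τ ∂μ := lintegral_congr fun x =>
        (lintegral_const_mul _ (hprod.comp measurable_prodMk_left)).symm
    _ = ∫⁻ ω, ∫⁻ x, g x * ∏ l, f l (x - Y l ω) ∂μ ∂τ :=
        lintegral_lintegral_swap ((hg.comp measurable_fst).mul hprod).aemeasurable
    _ = ∫⁻ ω, ∫⁻ z, f m z *
          ∏ l, Function.update f m g l (z + pivot m (fun k => Y k ω) l) ∂μ ∂τ := by
        refine lintegral_congr fun ω => ?_
        rw [← lintegral_add_right_eq_self _ (Y m ω)]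
        exact lintegral_congr fun z =>
          mul_prod_sub_eq_mul_prod_update f g m (fun k => Y k ω) z
    _ = ∫⁻ z, ∫⁻ ω, f m z *
          ∏ l, Function.update f m g l (z + pivot m (fun k => Y k ω) l) ∂τ ∂μ :=
        (lintegral_lintegral_swap
          (((hf m).comp measurable_fst).mul hprod').aemeasurable).symm
    _ = _ := lintegral_congr fun z =>
        lintegral_const_mul _ (hprod'.comp measurable_prodMk_left)

theorem FormBound.lintegral_rpow_average_le [SigmaFinite μ] (hY : ∀ l, Measurable (Y l)) {m : ι}
    {p r : ℝ} (hrp : r.HolderConjugate p) {C : ℝ≥0}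
    (h : FormBound τ (fun l ω => pivot m (fun k => Y k ω) l) μ Finset.univ p C)
    {f : ι → X → ℝ≥0∞} (hf : ∀ l, Measurable (f l)) :
    (∫⁻ x, (∫⁻ ω, ∏ l, f l (x - Y l ω) ∂τ) ^ r ∂μ) ^ (1 / r) ≤
      C * (∏ l ∈ Finset.univ.erase m, (∫⁻ x, f l x ^ p ∂μ) ^ (1 / p)) * ∫⁻ x, f m x ∂μ := by
  refine lintegral_rpow_le_of_forall_lintegral_mul_le hrp fun g hg => ?_
  have hfg : ∀ l, Measurable (Function.update f m g l) :=
    (Function.forall_update_iff f fun _ => Measurable).2 ⟨hg, fun l _ => hf l⟩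
  have hnorms : ∏ l, (∫⁻ x, Function.update f m g l x ^ p ∂μ) ^ (1 / p) =
      (∫⁻ x, g x ^ p ∂μ) ^ (1 / p) *
        ∏ l ∈ Finset.univ.erase m, (∫⁻ x, f l x ^ p ∂μ) ^ (1 / p) := by
    rw [← Finset.mul_prod_erase _ _ (Finset.mem_univ m), Function.update_self]
    congr 1
    exact Finset.prod_congr rfl fun l hl => by
      rw [Function.update_of_ne (Finset.ne_of_mem_erase hl)]
  rw [lintegral_mul_lintegral_prod_sub hY hf hg m]
  calc _ ≤ ∫⁻ z, f m z * (C * ∏ l, (∫⁻ x, Function.update f m g l x ^ p ∂μ) ^ (1 / p)) ∂μ := by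
        gcongr with z
        exact h.lintegral_prod_add_le hfg z
    _ = _ := by
        rw [lintegral_mul_const _ (hf m), hnorms]
        ring

end Average

section StrongType

open Metric Module
open scoped NNReal

lemma exists_basis_repr_eq_pivot {ι K E : Type*} [Finite ι] [DecidableEq ι] [Ring K]
    [AddCommGroup E] [Module K E] (b : Basis ι K E) (m : ι) :
    ∃ b' : Basis ι K E, ∀ x, ⇑(b'.repr x) = pivot m (b.repr x) := by
  let L : (ι → K) →ₗ[K] ι → K :=
    { toFun := pivot m
      map_add' := fun y z => by
        ext l
        rcases eq_or_ne l m with rfl | hl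
        · simp [pivot]
        · simp [pivot, hl, add_sub_add_comm]
      map_smul' := fun r y => by
        ext l
        rcases eq_or_ne l m with rfl | hl
        · simp [pivot]
        · simp [pivot, hl, mul_sub] }
  exact ⟨.ofEquivFun (b.equivFun.trans (.ofInvolutive L (pivot_pivot m))), fun x => rfl⟩

lemma holderConjugate_add_one_div {N : ℝ} (hN : 1 < N) :
    ((N + 1) / 2).HolderConjugate ((N + 1) / (N - 1)) := by
  refine Real.holderConjugate_iff.2 ⟨by linarith, ?_⟩
  rw [inv_div, inv_div, ← add_div, div_eq_one_iff_eq (by linarith)]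
  ring

lemma lpNorm_ofReal_eq {p : ℝ} (hp : 0 ≤ p) (g : ℝ → ℝ≥0∞) :
    _root_.lpNorm (ENNReal.ofReal p) g = (∫⁻ x, g x ^ p) ^ (1 / p) := by
  rw [_root_.lpNorm, if_neg ofReal_ne_top, toReal_ofReal hp]

lemma lpNorm_one_eq_lintegral (g : ℝ → ℝ≥0∞) : _root_.lpNorm 1 g = ∫⁻ x, g x := by
  simpa using lpNorm_ofReal_eq zero_le_one g

lemma natCast_add_one_div_two_eq_ofReal (n : ℕ) :
    ((n : ℝ≥0∞) + 1) / 2 = ENNReal.ofReal ((n + 1) / 2) := by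
  rw [ofReal_div_of_pos two_pos, ofReal_add n.cast_nonneg zero_le_one, ofReal_natCast, ofReal_one,
    ofReal_ofNat]

lemma natCast_add_one_div_sub_one_eq_ofReal {n : ℕ} (hn : 1 < n) :
    ((n : ℝ≥0∞) + 1) / ((n : ℝ≥0∞) - 1) = ENNReal.ofReal ((n + 1) / (n - 1)) := by
  rw [ofReal_div_of_pos (sub_pos.2 (Nat.one_lt_cast.2 hn)), ofReal_add n.cast_nonneg zero_le_one,
    ofReal_sub _ zero_le_one, ofReal_natCast, ofReal_one]

lemma toSphere_smul {E : Type*} [NormedAddCommGroup E] [NormedSpace ℝ E] [MeasurableSpace E]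
    [BorelSpace E] (c : ℝ≥0∞) (μ : Measure E) :
    (c • μ).toSphere = c • μ.toSphere := by
  ext s hs
  simp [Measure.toSphere_apply' _ hs, mul_left_comm]

lemma exists_sphAvg_eq_lintegral_toSphere {n : ℕ} (hn : n ≠ 0) :
    ∃ μ : Measure (EuclideanSpace ℝ (Fin n)), μ.IsAddHaarMeasure ∧ ∀ f : Fin n → ℝ → ℝ,
      sphAvg n f = fun x => ∫⁻ σ, ∏ j, ENNReal.ofReal (f j (x - σ.1 j)) ∂μ.toSphere := by
  have : NeZero n := ⟨hn⟩
  have hval : MeasurableEmbedding (Subtype.val : sphere (0 : EuclideanSpace ℝ (Fin n)) 1 → _) :=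
    .subtype_coe isClosed_sphere.measurableSet
  set S := (volume : Measure (EuclideanSpace ℝ (Fin n))).toSphere
  refine ⟨(S.map Subtype.val Set.univ)⁻¹ • volume, .smul _ ?_ ?_, fun f => funext fun x => ?_⟩
  · simp [hval.map_apply]
  · simpa [hval.map_apply] using Measure.toSphere_ne_zero volume
  · rw [toSphere_smul, sphAvg, normSphere, ← Measure.map_smul, hval.lintegral_map]

theorem strong_type_at_G_general {ι E : Type*} [Fintype ι] [DecidableEq ι] [NormedAddCommGroup E]
    [InnerProductSpace ℝ E] [MeasurableSpace E] [BorelSpace E] (b : Basis ι ℝ E) (μ : Measure E)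
    [μ.IsAddHaarMeasure] (hι : 3 ≤ Fintype.card ι) (m : ι) :
    ∃ C : ℝ, 0 < C ∧ ∀ f : ι → ℝ → ℝ≥0∞, (∀ l, Measurable (f l)) →
      _root_.lpNorm (((Fintype.card ι : ℝ≥0∞) + 1) / 2)
          (fun x => ∫⁻ σ, ∏ l, f l (x - b.repr (σ : E) l) ∂μ.toSphere) ≤
        ENNReal.ofReal C *
          (∏ l ∈ Finset.univ.erase m, _root_.lpNorm
            (((Fintype.card ι : ℝ≥0∞) + 1) / ((Fintype.card ι : ℝ≥0∞) - 1)) (f l)) *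
          _root_.lpNorm 1 (f m) := by
  have : FiniteDimensional ℝ E := b.finiteDimensional_of_finite
  obtain ⟨b', hb'⟩ := exists_basis_repr_eq_pivot b m
  obtain ⟨D, hD⟩ := exists_formBound_toSphere b' μ hι
  simp only [hb'] at hD
  have hN : (1 : ℝ) < Fintype.card ι := Nat.one_lt_cast.2 (by omega)
  have hrp := holderConjugate_add_one_div hN
  refine ⟨D + 1, by positivity, fun f hf => ?_⟩
  rw [natCast_add_one_div_two_eq_ofReal, natCast_add_one_div_sub_one_eq_ofReal (by omega),
    lpNorm_ofReal_eq hrp.nonneg, lpNorm_one_eq_lintegral]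
  simp_rw [lpNorm_ofReal_eq hrp.symm.nonneg]
  refine (hD.lintegral_rpow_average_le (measurable_repr_sphere b) hrp hf).trans ?_
  gcongr
  rw [ofReal_add D.coe_nonneg zero_le_one, ofReal_coe_nnreal]
  exact le_self_add

end StrongType

theorem strong_type_at_G (n : ℕ) (hn : 3 ≤ n) :
    ∃ C : ℝ, 0 < C ∧ ∀ f : Fin n → ℝ → ℝ,
      (∀ j, Measurable (f j)) → (∀ j x, 0 ≤ f j x) →
      lpNorm (((n : ℝ≥0∞) + 1) / 2) (sphAvg n f) ≤ ENNReal.ofReal C *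
        (∏ j ∈ Finset.univ.erase (⟨n - 1, by omega⟩ : Fin n),
          lpNorm (((n : ℝ≥0∞) + 1) / ((n : ℝ≥0∞) - 1))
            (fun x => ENNReal.ofReal (f j x))) *
        lpNorm 1 (fun x => ENNReal.ofReal (f (⟨n - 1, by omega⟩ : Fin n) x)) := by
  obtain ⟨μ, hμ, hT⟩ := exists_sphAvg_eq_lintegral_toSphere (n := n) (by omega)
  obtain ⟨C, hC, h⟩ := strong_type_at_G_general (EuclideanSpace.basisFun (Fin n) ℝ).toBasis μ
    (by simpa using hn) ⟨n - 1, by omega⟩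
  refine ⟨C, hC, fun f hf _ => ?_⟩
  simpa [hT] using h (fun j x => ENNReal.ofReal (f j x)) fun j => (hf j).ennreal_ofReal
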